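/- arXiv:1901.02746 — 5 statements merged into one kernel-verified Lean document; each statement's English description precedes it below -/
import Mathlib

section
/- Let U be a real Hilbert space, û ∈ U, and for each i ∈ ℕ let H̃_{i+1} : U ⇒ U be a set-valued map and W_{i+1}, M_{i+1}, Z_{i+1} : U → U be bounded linear operators. Suppose a sequence {u^i} ⊂ U satisfies the implicit proximal point inclusion: for each i there exists w^{i+1} ∈ H̃_{i+1}(u^{i+1}) with 0 = W_{i+1}w^{i+1} + M_{i+1}(u^{i+1} − u^i). If each Z_{i+1}M_{i+1} is self-adjoint and for some real numbers Δ_{i+1} one has ⟨Z_{i+1}W_{i+1}w^{i+1}, u^{i+1} − û⟩ + Δ_{i+1} ≥ (1/2)‖u^{i+1} − û‖²_{Z_{i+2}M_{i+2} − Z_{i+1}M_{i+1}} − (1/2)‖u^{i+1} − u^i‖²_{Z_{i+1}M_{i+1}} for all i ≤ N−1, then (1/2)‖u^N − û‖²_{Z_{N+1}M_{N+1}} ≤ (1/2)‖u^0 − û‖²_{Z_1M_1} + Σ_{i=0}^{N−1} Δ_{i+1}. -/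
/-!
Testing the proximal step with `Z_{i+1}` turns `⟪Z W w, u^{i+1} - û⟫` into
`-⟪Z M (u^{i+1} - uⁱ), u^{i+1} - û⟫`. Symmetry of `Z M` lets `three_point_identity` expand this
pairing into three quadratic terms, and the tested inequality becomes
`½‖u^{i+1} - û‖²_{Z_{i+2} M_{i+2}} ≤ ½‖uⁱ - û‖²_{Z_{i+1} M_{i+1}} + Δ_{i+1}`,
which telescopes. No positivity of the operators is needed.
-/

open Filter
open scoped RealInnerProductSpace Topology

/-- Three-point (Pythagoras) identity for the possibly indefinite symmetric form `⟪T ·, ·⟫`. -/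
lemma three_point_identity {U : Type*} [NormedAddCommGroup U] [InnerProductSpace ℝ U]
    (T : U →L[ℝ] U) (hT : ∀ a b : U, ⟪T a, b⟫ = ⟪a, T b⟫) (x y z : U) :
    ⟪T (y - x), y - z⟫ = (1 / 2) * ⟪T (y - x), y - x⟫
      - (1 / 2) * ⟪T (x - z), x - z⟫ + (1 / 2) * ⟪T (y - z), y - z⟫ := by
  obtain ⟨a, ha⟩ : ∃ a, a = y - z := ⟨_, rfl⟩
  obtain ⟨b, hb⟩ : ∃ b, b = y - x := ⟨_, rfl⟩
  have hab : x - z = a - b := by rw [ha, hb]; abel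
  have hsymm : ⟪T a, b⟫ = ⟪T b, a⟫ := by rw [hT a b, real_inner_comm]
  rw [hab, ← ha, ← hb, map_sub, inner_sub_left, inner_sub_right, inner_sub_right]
  linarith

/-- **Abstract testing estimate (Theorem 4.1).**
Let `U` be a real Hilbert space, `û ∈ U`, and for each `i ∈ ℕ` let `H̃ (i+1) : U ⇒ U` be a
set-valued map and `W (i+1), M (i+1), Z (i+1) : U → U` bounded linear operators.  Suppose the
sequence `{uⁱ}` satisfies the implicit proximal point inclusion: for each `i` there is
`w^{i+1} ∈ H̃ (i+1) (u^{i+1})` with `0 = W_{i+1} w^{i+1} + M_{i+1}(u^{i+1} − uⁱ)`.  If each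
`Z_{i+1} M_{i+1}` is self-adjoint and for some reals `Δ_{i+1}` the tested inequality (4.6) holds
for all `i ≤ N − 1`, then the estimate (4.7) holds.  Here `‖u‖²_T := ⟪T u, u⟫`. -/
theorem abstract_testing_estimate
    {U : Type*} [NormedAddCommGroup U] [InnerProductSpace ℝ U] [CompleteSpace U]
    (u : ℕ → U) (uhat : U)
    (Htil : ℕ → U → Set U)
    (W M Z : ℕ → U →L[ℝ] U)
    (Δ : ℕ → ℝ) (N : ℕ)
    (w : ℕ → U)
    (hw_mem : ∀ i : ℕ, w (i + 1) ∈ Htil (i + 1) (u (i + 1)))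
    (hw_step : ∀ i : ℕ, (0 : U) = W (i + 1) (w (i + 1)) + M (i + 1) (u (i + 1) - u i))
    (h_selfadj : ∀ i : ℕ, ∀ a b : U,
      ⟪Z (i + 1) (M (i + 1) a), b⟫ = ⟪a, Z (i + 1) (M (i + 1) b)⟫)
    (h_test : ∀ i < N,
      ⟪Z (i + 1) (W (i + 1) (w (i + 1))), u (i + 1) - uhat⟫ + Δ (i + 1) ≥
        (1 / 2) * ⟪Z (i + 2) (M (i + 2) (u (i + 1) - uhat))
            - Z (i + 1) (M (i + 1) (u (i + 1) - uhat)), u (i + 1) - uhat⟫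
        - (1 / 2) * ⟪Z (i + 1) (M (i + 1) (u (i + 1) - u i)), u (i + 1) - u i⟫) :
    (1 / 2) * ⟪Z (N + 1) (M (N + 1) (u N - uhat)), u N - uhat⟫ ≤
      (1 / 2) * ⟪Z 1 (M 1 (u 0 - uhat)), u 0 - uhat⟫
      + ∑ i ∈ Finset.range N, Δ (i + 1) := by
  induction N with
  | zero => simp
  | succ n ih =>
    have ih' := ih fun i hi => h_test i (Nat.lt_succ_of_lt hi)
    have htest := h_test n (Nat.lt_succ_self n)
    have hstep : W (n + 1) (w (n + 1)) = -M (n + 1) (u (n + 1) - u n) :=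
      eq_neg_of_add_eq_zero_left (hw_step n).symm
    have h3 := three_point_identity ((Z (n + 1)).comp (M (n + 1))) (h_selfadj n)
      (u n) (u (n + 1)) uhat
    simp only [ContinuousLinearMap.comp_apply] at h3
    rw [hstep, map_neg, inner_neg_left, inner_sub_left] at htest
    rw [Finset.sum_range_succ]
    linarith
end

section
/- Suppose Assumption 3.2 (iii) (the bound sup_{u∈U(ρ_x,ρ_y)} ‖K_{xy}(u)‖ ≤ R_K) and the step-parameter conditions (4.8) hold (in particular η_i = ψ_iσ_i = φ_iτ_i, ψ_{i+1} ≥ ψ_i, and 1 ≥ σ_iR_K²τ_i/(1−μ) for 0 < δ ≤ μ < 1). Then (1−μ)ψ_{i+1} ≥ η_i²φ_i^{-1}R_K², and the self-adjoint operator Z_{i+1}M_{i+1} with Z_{i+1} = diag(φ_iI, ψ_{i+1}I) and M_{i+1} = [[I, −τ_iK_{xy}(x^i,y^i)],[−ω_iσ_{i+1}K_{yx}(x^i,y^i), I]] satisfies Z_{i+1}M_{i+1} ≥ diag(δφ_iI, ((μ−δ)/(1−δ))ψ_{i+1}I) in the sense of positive semidefiniteness of the difference. -/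
/-!
The relations between the step parameters make both off-diagonal coefficients of
`Z_{i+1}M_{i+1}` equal to `η_i`: indeed `φ_i τ_i = η_i` and
`ψ_{i+1} ω_i σ_{i+1} = ω_i η_{i+1} = η_i`. As `K_{xy}` and `K_{yx}` are adjoint, the quadratic form
is `φ_i‖a‖² - 2 η_i ⟪a, K_{xy} b⟫ + ψ_{i+1}‖b‖²`. By Cauchy–Schwarz and `‖K_{xy}‖ ≤ R_K`, the
lower bound reduces to the nonnegativity of a real binary quadratic form in `‖a‖`, `‖b‖`, whose
discriminant condition is `η_i² R_K² ≤ φ_i (1 - μ) ψ_{i+1}`, which is the first claim.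
-/

open scoped RealInnerProductSpace Topology

/-- Young's inequality in discriminant form; the weight `c` on the first square is
compensated by `1 / c` on the second. -/
lemma weighted_young {p q r c A B : ℝ} (hp : 0 < p) (hc : 0 < c) (h : r ^ 2 ≤ p * q) :
    2 * (r * (A * B)) ≤ c * p * A ^ 2 + q / c * B ^ 2 := by
  have hcp : 0 < c * p := mul_pos hc hp
  have key : 0 ≤ (c * p) * (c * p * A ^ 2 + q / c * B ^ 2 - 2 * (r * (A * B))) := by
    have e : (c * p) * (c * p * A ^ 2 + q / c * B ^ 2 - 2 * (r * (A * B)))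
        = (c * p * A - r * B) ^ 2 + (p * q - r ^ 2) * B ^ 2 := by
      field_simp
      ring
    rw [e]
    have := mul_nonneg (sub_nonneg.2 h) (sq_nonneg B)
    positivity
  linarith [nonneg_of_mul_nonneg_right key hcp]

/-- **Corollary 4.3.**
Suppose Assumption 3.2 (iii) (`‖K_{xy}(u)‖ ≤ R_K` on `U(ρ_x,ρ_y)`, with
`K_{xy}(u) = K_{yx}(u)*`) and the step-parameter conditions (4.8) hold.  Then
`(1−μ)ψ_{i+1} ≥ η_i² φ_i⁻¹ R_K²` and the self-adjoint operator `Z_{i+1}M_{i+1}` satisfies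
`Z_{i+1}M_{i+1} ≥ diag(δφ_i I, ((μ−δ)/(1−δ))ψ_{i+1} I)`, expressed below as an inequality of
the associated quadratic forms: for all `(a,b) ∈ X × Y`,
`⟪Z_{i+1}M_{i+1}(a,b), (a,b)⟫ ≥ δφ_i‖a‖² + ((μ−δ)/(1−δ))ψ_{i+1}‖b‖²`, where
`Z_{i+1}M_{i+1} = [[φ_i I, −φ_iτ_i K_{xy}(uⁱ)], [−ψ_{i+1}ω_iσ_{i+1} K_{yx}(uⁱ), ψ_{i+1} I]]`. -/
theorem testing_operator_lower_bound
    {X Y : Type*} [NormedAddCommGroup X] [InnerProductSpace ℝ X] [CompleteSpace X]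
    [NormedAddCommGroup Y] [InnerProductSpace ℝ Y] [CompleteSpace Y]
    (Kxy : X → Y → (Y →L[ℝ] X)) (Kyx : X → Y → (X →L[ℝ] Y))
    (USet : Set (X × Y)) (R_K : ℝ)
    (h_adj : ∀ u ∈ USet, Kxy u.1 u.2 = ContinuousLinearMap.adjoint (Kyx u.1 u.2))
    (h_RK : ∀ u ∈ USet, ‖Kxy u.1 u.2‖ ≤ R_K)
    -- step and testing parameters and the conditions (4.8)
    (τ σ ω φ ψ η : ℕ → ℝ)
    (γtG γtF lam_y δ μ : ℝ)
    (hτ : ∀ i, 0 < τ i) (hσ : ∀ i, 0 < σ i) (hω : ∀ i, 0 < ω i)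
    (hφ : ∀ i, 0 < φ i) (hψ : ∀ i, 0 < ψ i) (hη : ∀ i, 0 < η i)
    (hδ : 0 < δ) (hδμ : δ ≤ μ) (hμ : μ < 1)
    (hγtG : 0 ≤ γtG) (hγtF : 0 ≤ γtF) (hlam_y : 0 ≤ lam_y)
    (h48a_ω : ∀ i, ω i = η i / η (i + 1))
    (h48a_ψσ : ∀ i, η i = ψ i * σ i)
    (h48a_φτ : ∀ i, η i = φ i * τ i)
    (h48b_φ : ∀ i, φ (i + 1) = φ i * (1 + 2 * τ i * γtG))
    (h48b_ψ : ∀ i, ψ (i + 2) = ψ (i + 1) * (1 + 2 * σ (i + 1) * γtF))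
    (hψ_mono : ∀ i, ψ i ≤ ψ (i + 1))
    (h48c : ∀ i, 1 ≥ σ i * (R_K ^ 2 * τ i / (1 - μ) + lam_y / ω i))
    -- the (iterate) points at which the operators are evaluated
    (x : ℕ → X) (y : ℕ → Y) (hmem : ∀ i, (x i, y i) ∈ USet)
    (i : ℕ) :
    (1 - μ) * ψ (i + 1) ≥ (η i) ^ 2 * (φ i)⁻¹ * R_K ^ 2 ∧
    ∀ (a : X) (b : Y),
      φ i * ‖a‖ ^ 2 - φ i * τ i * ⟪a, Kxy (x i) (y i) b⟫
        - ψ (i + 1) * ω i * σ (i + 1) * ⟪Kyx (x i) (y i) a, b⟫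
        + ψ (i + 1) * ‖b‖ ^ 2 ≥
      δ * φ i * ‖a‖ ^ 2 + (μ - δ) / (1 - δ) * ψ (i + 1) * ‖b‖ ^ 2 := by
  have hμ' : 0 < 1 - μ := by linarith
  have hδ' : 0 < 1 - δ := by linarith
  have hστ : σ i * τ i * R_K ^ 2 ≤ 1 - μ := by
    have h1 : 0 ≤ σ i * (lam_y / ω i) :=
      mul_nonneg (hσ i).le (div_nonneg hlam_y (hω i).le)
    have h2 : σ i * τ i * R_K ^ 2 / (1 - μ) ≤ 1 := by
      have e : σ i * (R_K ^ 2 * τ i / (1 - μ) + lam_y / ω i)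
          = σ i * τ i * R_K ^ 2 / (1 - μ) + σ i * (lam_y / ω i) := by ring
      linarith [h48c i]
    simpa using (div_le_iff₀ hμ').1 h2
  have hdisc : (η i * R_K) ^ 2 ≤ φ i * ((1 - μ) * ψ (i + 1)) := by
    calc (η i * R_K) ^ 2 = φ i * (ψ i * (σ i * τ i * R_K ^ 2)) := by
          have e : η i ^ 2 = (φ i * τ i) * (ψ i * σ i) := by
            rw [← h48a_φτ, ← h48a_ψσ, sq]
          rw [mul_pow, e]
          ring
      _ ≤ φ i * (ψ (i + 1) * (1 - μ)) := by
          refine mul_le_mul_of_nonneg_left ?_ (hφ i).le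
          exact (mul_le_mul_of_nonneg_left hστ (hψ i).le).trans
            (mul_le_mul_of_nonneg_right (hψ_mono i) hμ'.le)
      _ = φ i * ((1 - μ) * ψ (i + 1)) := by ring
  refine ⟨?_, fun a b => ?_⟩
  · have e : (η i) ^ 2 * (φ i)⁻¹ * R_K ^ 2 = (η i * R_K) ^ 2 / φ i := by ring
    rw [ge_iff_le, e, div_le_iff₀' (hφ i)]
    exact hdisc
  · have hcoef : ψ (i + 1) * ω i * σ (i + 1) = η i := by
      have hne := (hη (i + 1)).ne'
      calc ψ (i + 1) * ω i * σ (i + 1) = ω i * η (i + 1) := by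
            rw [h48a_ψσ (i + 1)]
            ring
        _ = η i := by
            rw [h48a_ω i]
            field_simp
    have hadj : ⟪Kyx (x i) (y i) a, b⟫ = ⟪a, Kxy (x i) (y i) b⟫ := by
      rw [h_adj _ (hmem i), ContinuousLinearMap.adjoint_inner_right]
    have hinner : ⟪a, Kxy (x i) (y i) b⟫ ≤ R_K * (‖a‖ * ‖b‖) := by
      calc ⟪a, Kxy (x i) (y i) b⟫ ≤ ‖a‖ * ‖Kxy (x i) (y i) b‖ := real_inner_le_norm _ _
        _ ≤ ‖a‖ * (R_K * ‖b‖) :=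
            mul_le_mul_of_nonneg_left
              ((Kxy (x i) (y i)).le_of_opNorm_le (h_RK _ (hmem i)) b) (norm_nonneg a)
        _ = R_K * (‖a‖ * ‖b‖) := by ring
    have hη_inner := mul_le_mul_of_nonneg_left hinner (hη i).le
    have hyoung := weighted_young (A := ‖a‖) (B := ‖b‖) (hφ i) hδ' hdisc
    have hsplit : (1 - μ) * ψ (i + 1) / (1 - δ) * ‖b‖ ^ 2
        = ψ (i + 1) * ‖b‖ ^ 2 - (μ - δ) / (1 - δ) * ψ (i + 1) * ‖b‖ ^ 2 := by
      have hne := hδ'.ne'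
      field_simp
      ring
    rw [hcoef, ← h48a_φτ, hadj]
    linarith
end

section
/- Fix i ∈ ℕ. Suppose Assumption 3.1 and Assumption 3.2 (ii) and (iii) hold in U(ρ_x,ρ_y), that u^{i+1} = (x^{i+1},y^{i+1}) is produced from u^i = (x^i,y^i) by one GPDPS step with ω_i ≤ 1, and that r_{x,i}, r_{y,i}, δ_x, δ_y > 0 and a critical point û = (x̂,ŷ) are such that B(x̂, r_{x,i}+δ_x) × B(ŷ, r_{y,i}+δ_y) ⊆ U(ρ_x,ρ_y) and u^i ∈ B(x̂, r_{x,i}) × B(ŷ, r_{y,i}). If τ_i ≤ δ_x/(2R_K r_{y,i} + 2L_x(ŷ)r_{x,i}) and σ_{i+1} ≤ δ_y/(L_y(x̂)r_{y,i} + R_K(r_{x,i}+δ_x)), then u^{i+1} ∈ B(x̂, r_{x,i}+δ_x) × B(ŷ, r_{y,i}+δ_y) and ‖x̄^{i+1} − x̂‖ ≤ r_{x,i} + δ_x, where x̄^{i+1} = x^{i+1} + ω_i(x^{i+1} − x^i). -/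
/-!
Two facts about the geometry of the step carry the proof.

*Prox steps.* Monotonicity of `∂G` makes `prox_{τG}` firmly nonexpansive: if `p`, `q` are the
proximal points of `a`, `c`, then `‖2(p - q) - (a - c)‖ ≤ ‖a - c‖`
(`IsProxPt.norm_reflection_le`), hence also `‖p - q‖ ≤ ‖a - c‖`. The critical point is a fixed point
of both prox steps, so both inequalities apply with `q` the critical point. With `a = xⁱ - x̂`,
`b = xⁱ⁺¹ - x̂`, and `d` the increment of `τ K_x` from the critical point to `uⁱ`, where
`‖d‖ ≤ δ_x / 2`, this gives `‖b‖ ≤ ‖a - d‖` and `‖2b - a‖ ≤ ‖a - d‖ + ‖d‖`. Both are at most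
`r_x + δ_x`, and `x̄ - x̂ = (1 - ω) b + ω (2b - a)` is a convex combination of the two vectors. The
plain triangle inequality for the over-relaxed point would not be sharp enough here: the reflection
bound is what is needed.

*Mixed derivatives.* The bound on `K_{xy}`, the `y`-derivative of `K_x`, makes `K_x` Lipschitz in
`y`. The dual step needs `K_y` to be Lipschitz in `x` with the same constant. This requires no
symmetry of second derivatives: by the mean value theorem in `x`, the map
`y' ↦ K(x', y') - K(x, y')` is Lipschitz with constant `R ‖x' - x‖`, and its gradient at `y` is
`K_y(x', y) - K_y(x, y)` (`norm_partial_grad_sub_le`).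
-/


open scoped RealInnerProductSpace Topology

noncomputable section

/-- Convex subdifferential of an extended-real-valued functional on a Hilbert space. -/
def ESubdiff {X : Type*} [NormedAddCommGroup X] [InnerProductSpace ℝ X]
    (G : X → EReal) (x : X) : Set X :=
  {w | ∀ z : X, G x + ((⟪w, z - x⟫ : ℝ) : EReal) ≤ G z}

/-- `x` is the proximal point `prox_{τG}(v) = (I + τ∂G)⁻¹(v)`:
there is `w ∈ ∂G(x)` with `x + τ w = v`. -/
def IsProxPt {X : Type*} [NormedAddCommGroup X] [InnerProductSpace ℝ X]
    (G : X → EReal) (τ : ℝ) (v x : X) : Prop :=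
  ∃ w ∈ ESubdiff G x, x + τ • w = v

/-- An extended-real-valued functional is proper. -/
def EProper {X : Type*} (G : X → EReal) : Prop :=
  (∃ x, G x ≠ ⊤) ∧ ∀ x, G x ≠ ⊥

/-- Convexity of an extended-real-valued functional. -/
def EConvexOn {X : Type*} [AddCommGroup X] [Module ℝ X] (G : X → EReal) : Prop :=
  ∀ x z : X, ∀ t : ℝ, 0 ≤ t → t ≤ 1 →
    G (t • x + (1 - t) • z) ≤ (t : EReal) * G x + ((1 - t : ℝ) : EReal) * G z

/-- The subdifferential of a proper functional is monotone. -/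
lemma ESubdiff.inner_nonneg {X : Type*} [NormedAddCommGroup X] [InnerProductSpace ℝ X]
    {G : X → EReal} (hG : EProper G) {x z w v : X}
    (hw : w ∈ ESubdiff G x) (hv : v ∈ ESubdiff G z) : 0 ≤ ⟪w - v, x - z⟫ := by
  -- A point with nonempty subdifferential lies in the effective domain.
  have hfin : ∀ {p u : X}, u ∈ ESubdiff G p → G p ≠ ⊤ := by
    intro p u hu hp
    obtain ⟨⟨q, hq⟩, -⟩ := hG
    have := hu q
    rw [hp, EReal.top_add_coe, top_le_iff] at this
    exact hq this
  have h1 := hw z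
  have h2 := hv x
  rw [← EReal.coe_toReal (hfin hw) (hG.2 x), ← EReal.coe_toReal (hfin hv) (hG.2 z)] at h1 h2
  norm_cast at h1 h2
  have e : ⟪w - v, x - z⟫ = -⟪w, z - x⟫ - ⟪v, x - z⟫ := by
    rw [inner_sub_left, ← neg_sub z x, inner_neg_right]
  linarith

/-- The reflected proximal map `2 prox - I` is nonexpansive. -/
lemma IsProxPt.norm_reflection_le {X : Type*} [NormedAddCommGroup X] [InnerProductSpace ℝ X]
    {G : X → EReal} (hG : EProper G) {τ : ℝ} (hτ : 0 < τ) {a c p q : X}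
    (hp : IsProxPt G τ a p) (hq : IsProxPt G τ c q) :
    ‖(2 : ℝ) • (p - q) - (a - c)‖ ≤ ‖a - c‖ := by
  obtain ⟨w, hw, rfl⟩ := hp
  obtain ⟨v, hv, rfl⟩ := hq
  have hm := mul_nonneg hτ.le (ESubdiff.inner_nonneg hG hw hv)
  have e1 : (2 : ℝ) • (p - q) - (p + τ • w - (q + τ • v)) = (p - q) - τ • (w - v) := by module
  have e2 : p + τ • w - (q + τ • v) = (p - q) + τ • (w - v) := by module
  rw [e1, e2]
  refine le_of_sq_le_sq ?_ (norm_nonneg _)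
  rw [norm_sub_sq_real, norm_add_sq_real, inner_smul_right, real_inner_comm]
  linarith

/-- The proximal map is nonexpansive. -/
lemma IsProxPt.norm_sub_le {X : Type*} [NormedAddCommGroup X] [InnerProductSpace ℝ X]
    {G : X → EReal} (hG : EProper G) {τ : ℝ} (hτ : 0 < τ) {a c p q : X}
    (hp : IsProxPt G τ a p) (hq : IsProxPt G τ c q) : ‖p - q‖ ≤ ‖a - c‖ := by
  have h := hp.norm_reflection_le hG hτ hq
  have h2 := norm_add_le ((2 : ℝ) • (p - q) - (a - c)) (a - c)
  rw [sub_add_cancel, norm_smul, Real.norm_ofNat] at h2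
  linarith

/-- If the partial gradient `K_x` is `R`-Lipschitz in `y` at `y`, uniformly over a convex set `S`,
then the partial gradient `K_y(·, y)` is `R`-Lipschitz on `S`. -/
lemma norm_partial_grad_sub_le {X Y : Type*} [NormedAddCommGroup X] [InnerProductSpace ℝ X]
    [CompleteSpace X] [NormedAddCommGroup Y] [InnerProductSpace ℝ Y] [CompleteSpace Y]
    {K : X → Y → ℝ} {Kx : X → Y → X} {Ky : X → Y → Y}
    (hKx : ∀ x y, HasGradientAt (fun x' => K x' y) (Kx x y) x)
    (hKy : ∀ x y, HasGradientAt (fun y' => K x y') (Ky x y) y)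
    {S : Set X} (hS : Convex ℝ S) {T : Set Y} {y : Y} (hT : T ∈ 𝓝 y) {R : ℝ} (hR : 0 ≤ R)
    (hLip : ∀ z ∈ S, ∀ y' ∈ T, ‖Kx z y' - Kx z y‖ ≤ R * ‖y' - y‖)
    {x x' : X} (hx : x ∈ S) (hx' : x' ∈ S) :
    ‖Ky x' y - Ky x y‖ ≤ R * ‖x' - x‖ := by
  have hd := (hKy x' y).hasFDerivAt.sub (hKy x y).hasFDerivAt
  rw [← map_sub] at hd
  rw [← LinearIsometryEquiv.norm_map (InnerProductSpace.toDual ℝ Y)]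
  refine hd.le_of_lip' (by positivity) ?_
  filter_upwards [hT] with y' hy'
  have hmv := hS.norm_image_sub_le_of_norm_hasFDerivWithin_le
    (f := fun z => K z y' - K z y) (C := R * ‖y' - y‖)
    (f' := fun z => InnerProductSpace.toDual ℝ X (Kx z y' - Kx z y))
    (fun z _ => by
      rw [map_sub]
      exact ((hKx z y').hasFDerivAt.sub (hKx z y).hasFDerivAt).hasFDerivWithinAt)
    (fun z hz => by
      rw [LinearIsometryEquiv.norm_map]
      exact hLip z hz y' hy') hx hx'
  calc _ = ‖K x' y' - K x' y - (K x y' - K x y)‖ := by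
        congr 1
        simp only [Pi.sub_apply]
        ring
    _ ≤ _ := hmv
    _ = _ := by ring

/-- A Lipschitz constant on a ball of positive radius is nonnegative unless the space is trivial
(where every real number is a Lipschitz constant). -/
lemma nonneg_of_lipschitz_on_closedBall {E V : Type*} [NormedAddCommGroup E] [NormedSpace ℝ E]
    [Nontrivial E] [NormedAddCommGroup V] {f : E → V} {c : E} {r L : ℝ} (hr : 0 < r)
    (h : ∀ z ∈ Metric.closedBall c r, ‖f z - f c‖ ≤ L * ‖z - c‖) : 0 ≤ L := by
  obtain ⟨v, hv⟩ := exists_norm_eq E hr.le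
  have h1 := h (c + v) (by simp [hv])
  rw [add_sub_cancel_left, hv] at h1
  exact nonneg_of_mul_nonneg_left ((norm_nonneg _).trans h1) hr

/-- A positive number bounded by a quotient with positive numerator forces the denominator to be
positive, also under the convention `a / 0 = 0`. -/
lemma mul_le_of_pos_of_le_div {t a D : ℝ} (ht : 0 < t) (ha : 0 < a) (h : t ≤ a / D) :
    t * D ≤ a := by
  have hD : 0 < D := by
    by_contra hD
    exact absurd (ht.trans_le h) (not_lt.2 (div_nonpos_of_nonneg_of_nonpos ha.le (not_lt.1 hD)))
  exact (le_div_iff₀ hD).1 h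

/-- **Lemma 5.1: one-step locality of GPDPS.**
Suppose Assumption 3.1 and Assumption 3.2 (ii), (iii) hold in
`U(ρ_x,ρ_y) = (B(x̂,ρ_x) ∩ X_G) × (B(ŷ,ρ_y) ∩ Y_{F*})`, that `u^{i+1}` is produced from `uⁱ`
by one GPDPS step with `ω_i ≤ 1`, and that `r_{x,i}, r_{y,i}, δ_x, δ_y > 0` and a critical
point `û` are such that `B(x̂, r_{x,i}+δ_x) × B(ŷ, r_{y,i}+δ_y) ⊆ U(ρ_x,ρ_y)` and
`uⁱ ∈ B(x̂, r_{x,i}) × B(ŷ, r_{y,i})`.  If the step bounds (5.1) hold then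
`u^{i+1} ∈ B(x̂, r_{x,i}+δ_x) × B(ŷ, r_{y,i}+δ_y)` and `‖x̄^{i+1} − x̂‖ ≤ r_{x,i}+δ_x`. -/
theorem gpdps_one_step_local
    {X Y : Type*} [NormedAddCommGroup X] [InnerProductSpace ℝ X] [CompleteSpace X]
    [NormedAddCommGroup Y] [InnerProductSpace ℝ Y] [CompleteSpace Y]
    (G : X → EReal) (F : Y → EReal)
    (hGp : EProper G) (hGc : EConvexOn G) (hGl : LowerSemicontinuous G)
    (hFp : EProper F) (hFc : EConvexOn F) (hFl : LowerSemicontinuous F)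
    (K : X → Y → ℝ) (Kx : X → Y → X) (Ky : X → Y → Y)
    (Kxy : X → Y → (Y →L[ℝ] X))
    (hKx : ∀ x y, HasGradientAt (fun x' => K x' y) (Kx x y) x)
    (hKy : ∀ x y, HasGradientAt (fun y' => K x y') (Ky x y) y)
    (hC1 : Continuous fun p : X × Y => (Kx p.1 p.2, Ky p.1 p.2))
    -- critical point û = (x̂,ŷ) ∈ H⁻¹(0)
    (xhat : X) (yhat : Y)
    (hcritx : ∃ w ∈ ESubdiff G xhat, w + Kx xhat yhat = 0)
    (hcrity : ∃ w ∈ ESubdiff F yhat, w - Ky xhat yhat = 0)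
    -- Assumption 3.1
    (γG γF : ℝ) (XG : Set X) (YF : Set Y) (hXG : XG ∈ 𝓝 xhat) (hYF : YF ∈ 𝓝 yhat)
    (h31x : ∀ x ∈ XG, ∀ w ∈ ESubdiff G x,
      ⟪w + Kx xhat yhat, x - xhat⟫ ≥ γG * ‖x - xhat‖ ^ 2)
    (h31y : ∀ y ∈ YF, ∀ w ∈ ESubdiff F y,
      ⟪w - Ky xhat yhat, y - yhat⟫ ≥ γF * ‖y - yhat‖ ^ 2)
    -- the neighborhood U(ρ_x,ρ_y)
    (ρx ρy : ℝ)
    -- Assumption 3.2 (ii) and (iii) on U(ρ_x,ρ_y)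
    (Lx : Y → ℝ) (Ly : X → ℝ) (R_K : ℝ)
    (hKxyderiv : ∀ x y, x ∈ Metric.closedBall xhat ρx ∩ XG →
      y ∈ Metric.closedBall yhat ρy ∩ YF →
      HasFDerivAt (fun y' => Kx x y') (Kxy x y) y)
    (hLipx : ∀ x x' y, x ∈ Metric.closedBall xhat ρx ∩ XG →
      x' ∈ Metric.closedBall xhat ρx ∩ XG → y ∈ Metric.closedBall yhat ρy ∩ YF →
      ‖Kx x' y - Kx x y‖ ≤ Lx y * ‖x' - x‖)
    (hLipy : ∀ x y y', x ∈ Metric.closedBall xhat ρx ∩ XG →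
      y ∈ Metric.closedBall yhat ρy ∩ YF → y' ∈ Metric.closedBall yhat ρy ∩ YF →
      ‖Ky x y' - Ky x y‖ ≤ Ly x * ‖y' - y‖)
    (hRK : ∀ x y, x ∈ Metric.closedBall xhat ρx ∩ XG →
      y ∈ Metric.closedBall yhat ρy ∩ YF → ‖Kxy x y‖ ≤ R_K)
    -- one GPDPS step
    (τi σi ωi : ℝ) (hτi : 0 < τi) (hσi : 0 < σi) (hωi : 0 < ωi) (hωi1 : ωi ≤ 1)
    (xi : X) (yi : Y) (xn : X) (yn : Y) (xbar : X)
    (hxstep : IsProxPt G τi (xi - τi • Kx xi yi) xn)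
    (hxbar : xbar = xn + ωi • (xn - xi))
    (hystep : IsProxPt F σi (yi + σi • Ky xbar yi) yn)
    -- locality data
    (rxi ryi δx δy : ℝ)
    (hrxi : 0 < rxi) (hryi : 0 < ryi) (hδx : 0 < δx) (hδy : 0 < δy)
    (hballs : Metric.closedBall xhat (rxi + δx) ×ˢ Metric.closedBall yhat (ryi + δy) ⊆
      (Metric.closedBall xhat ρx ∩ XG) ×ˢ (Metric.closedBall yhat ρy ∩ YF))
    (hui : xi ∈ Metric.closedBall xhat rxi ∧ yi ∈ Metric.closedBall yhat ryi)
    -- the step length bounds (5.1)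
    (hτbound : τi ≤ δx / (2 * R_K * ryi + 2 * Lx yhat * rxi))
    (hσbound : σi ≤ δy / (Ly xhat * ryi + R_K * (rxi + δx))) :
    xn ∈ Metric.closedBall xhat (rxi + δx) ∧ yn ∈ Metric.closedBall yhat (ryi + δy) ∧
    ‖xbar - xhat‖ ≤ rxi + δx := by
  obtain ⟨hxi, hyi⟩ := hui
  have hx0 : xhat ∈ Metric.closedBall xhat (rxi + δx) := Metric.mem_closedBall_self (by linarith)
  have hy0 : yhat ∈ Metric.closedBall yhat (ryi + δy) := Metric.mem_closedBall_self (by linarith)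
  have hxi' : xi ∈ Metric.closedBall xhat (rxi + δx) :=
    Metric.closedBall_subset_closedBall (by linarith) hxi
  have hyi' : yi ∈ Metric.closedBall yhat (ryi + δy) :=
    Metric.closedBall_subset_closedBall (by linarith) hyi
  have hUx : ∀ x ∈ Metric.closedBall xhat (rxi + δx), x ∈ Metric.closedBall xhat ρx ∩ XG :=
    fun x hx => (hballs (Set.mk_mem_prod hx hy0)).1
  have hUy : ∀ y ∈ Metric.closedBall yhat (ryi + δy), y ∈ Metric.closedBall yhat ρy ∩ YF :=
    fun y hy => (hballs (Set.mk_mem_prod hx0 hy)).2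
  have hR0 : 0 ≤ R_K := (norm_nonneg _).trans (hRK _ _ (hUx _ hx0) (hUy _ hy0))
  have hKxLip : ∀ x ∈ Metric.closedBall xhat (rxi + δx),
      ∀ y ∈ Metric.closedBall yhat (ryi + δy), ∀ y' ∈ Metric.closedBall yhat (ryi + δy),
      ‖Kx x y' - Kx x y‖ ≤ R_K * ‖y' - y‖ := fun x hx y hy y' hy' =>
    (convex_closedBall yhat (ryi + δy)).norm_image_sub_le_of_norm_hasFDerivWithin_le
      (f := fun z => Kx x z) (f' := fun z => Kxy x z)
      (fun z hz => (hKxyderiv x z (hUx _ hx) (hUy _ hz)).hasFDerivWithinAt)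
      (fun z hz => hRK x z (hUx _ hx) (hUy _ hz)) hy hy'
  have hxin : ‖xi - xhat‖ ≤ rxi := mem_closedBall_iff_norm.1 hxi
  have hyin : ‖yi - yhat‖ ≤ ryi := mem_closedBall_iff_norm.1 hyi
  have hτ' := mul_le_of_pos_of_le_div hτi hδx hτbound
  have hσ' := mul_le_of_pos_of_le_div hσi hδy hσbound
  -- The critical point is a fixed point of both prox steps.
  have hxfix : IsProxPt G τi (xhat - τi • Kx xhat yhat) xhat := by
    obtain ⟨w, hw, h0⟩ := hcritx
    refine ⟨w, hw, ?_⟩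
    rw [eq_neg_of_add_eq_zero_left h0]
    module
  have hyfix : IsProxPt F σi (yhat + σi • Ky xhat yhat) yhat := by
    obtain ⟨w, hw, h0⟩ := hcrity
    exact ⟨w, hw, by rw [sub_eq_zero.1 h0]⟩
  set d : X := τi • (Kx xi yi - Kx xhat yhat) with hd
  have hdn : ‖d‖ ≤ δx / 2 := by
    -- `Lx yhat` may be negative when `X` is trivial, but then `d = 0`.
    rcases subsingleton_or_nontrivial X with hX | hX
    · rw [Subsingleton.elim d 0, norm_zero]
      linarith
    · have hlip : ∀ z ∈ Metric.closedBall xhat (rxi + δx),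
          ‖Kx z yhat - Kx xhat yhat‖ ≤ Lx yhat * ‖z - xhat‖ :=
        fun z hz => hLipx xhat z yhat (hUx _ hx0) (hUx _ hz) (hUy _ hy0)
      have hL0 : 0 ≤ Lx yhat :=
        nonneg_of_lipschitz_on_closedBall (f := fun z => Kx z yhat) (by linarith) hlip
      have h1 := (hlip xi hxi').trans (mul_le_mul_of_nonneg_left hxin hL0)
      have h2 := (hKxLip xi hxi' yhat hy0 yi hyi').trans (mul_le_mul_of_nonneg_left hyin hR0)
      have h3 := norm_sub_le_norm_sub_add_norm_sub (Kx xi yi) (Kx xi yhat) (Kx xhat yhat)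
      rw [hd, norm_smul, Real.norm_of_nonneg hτi.le]
      have h4 := mul_le_mul_of_nonneg_left (h3.trans (add_le_add h2 h1)) hτi.le
      linarith
  have he : xi - τi • Kx xi yi - (xhat - τi • Kx xhat yhat) = (xi - xhat) - d := by
    rw [hd]
    module
  have hen : ‖(xi - xhat) - d‖ ≤ rxi + δx / 2 := (_root_.norm_sub_le _ _).trans (by linarith)
  have hb : ‖xn - xhat‖ ≤ rxi + δx / 2 := by
    have h := hxstep.norm_sub_le hGp hτi hxfix
    rw [he] at h
    exact h.trans hen
  have href : ‖(2 : ℝ) • (xn - xhat) - (xi - xhat)‖ ≤ rxi + δx := by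
    have h := hxstep.norm_reflection_le hGp hτi hxfix
    rw [he] at h
    have e : (2 : ℝ) • (xn - xhat) - (xi - xhat)
        = ((2 : ℝ) • (xn - xhat) - ((xi - xhat) - d)) - d := by module
    rw [e]
    exact (_root_.norm_sub_le _ _).trans (by linarith)
  have hxbarn : ‖xbar - xhat‖ ≤ rxi + δx := by
    have e : xbar - xhat
        = (1 - ωi) • (xn - xhat) + ωi • ((2 : ℝ) • (xn - xhat) - (xi - xhat)) := by
      rw [hxbar]
      module
    rw [← mem_closedBall_zero_iff, e]
    exact convex_closedBall (0 : X) (rxi + δx)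
      (mem_closedBall_zero_iff.2 (by linarith)) (mem_closedBall_zero_iff.2 href)
      (by linarith) hωi.le (by ring)
  refine ⟨mem_closedBall_iff_norm.2 (by linarith), mem_closedBall_iff_norm.2 ?_, hxbarn⟩
  have hxb : xbar ∈ Metric.closedBall xhat (rxi + δx) := mem_closedBall_iff_norm.2 hxbarn
  -- As for `Lx`, the constant `Ly xhat` may be negative when `Y` is trivial.
  rcases subsingleton_or_nontrivial Y with hY | hY
  · rw [Subsingleton.elim (yn - yhat) 0, norm_zero]
    linarith
  have hlip : ∀ z ∈ Metric.closedBall yhat (ryi + δy),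
      ‖Ky xhat z - Ky xhat yhat‖ ≤ Ly xhat * ‖z - yhat‖ :=
    fun z hz => hLipy xhat yhat z (hUx _ hx0) (hUy _ hy0) (hUy _ hz)
  have hL0 : 0 ≤ Ly xhat :=
    nonneg_of_lipschitz_on_closedBall (f := fun z => Ky xhat z) (by linarith) hlip
  have h1 := (hlip yi hyi').trans (mul_le_mul_of_nonneg_left hyin hL0)
  -- `δy > 0` puts `yi` in the interior of the larger ball.
  have hnhds : Metric.closedBall yhat (ryi + δy) ∈ 𝓝 yi :=
    Filter.mem_of_superset
      (Metric.isOpen_ball.mem_nhds (mem_ball_iff_norm.2 (by linarith)))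
      Metric.ball_subset_closedBall
  have h2 : ‖Ky xbar yi - Ky xhat yi‖ ≤ R_K * (rxi + δx) :=
    (norm_partial_grad_sub_le hKx hKy (convex_closedBall xhat (rxi + δx)) hnhds hR0
      (fun z hz y' hy' => hKxLip z hz yi hyi' y' hy') hx0 hxb).trans
      (mul_le_mul_of_nonneg_left hxbarn hR0)
  have h3 := norm_sub_le_norm_sub_add_norm_sub (Ky xbar yi) (Ky xhat yi) (Ky xhat yhat)
  have h4 := mul_le_mul_of_nonneg_left (h3.trans (add_le_add h2 h1)) hσi.le
  have h5 := hystep.norm_sub_le hFp hσi hyfix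
  have e : yi + σi • Ky xbar yi - (yhat + σi • Ky xhat yhat)
      = (yi - yhat) + σi • (Ky xbar yi - Ky xhat yhat) := by module
  have h6 := norm_add_le (yi - yhat) (σi • (Ky xbar yi - Ky xhat yhat))
  rw [norm_smul, Real.norm_of_nonneg hσi.le] at h6
  rw [e] at h5
  linarith
end
end

section
/- Under the assumptions of Theorem 6.1, 6.3, or 6.4 (fixed parameters 0 < δ ≤ μ < 1, step lengths τ_i ≤ τ_0 and σ_i ≡ σ > 0, relaxation parameters ω_i, constants L_x(ŷ), L_y(x̂), R_K from Assumption 3.2, and ρ_x, ρ_y > 0), there exists ε > 0 such that whenever the initial iterate u^0 = (x^0,y^0) satisfies r_max := sqrt(2δ^{-1}(‖x^0 − x̂‖² + ν^{-1}‖y^0 − ŷ‖²)) ≤ ε with ν := σ_1ω_0/τ_0, Assumption 5.2 holds: i.e., there exist δ_x, δ_y > 0 and r_y ≥ r_max·sqrt(ν(1−δ)δ/(μ−δ)) such that B(x̂, r_max+δ_x) × B(ŷ, r_y+δ_y) ⊆ U(ρ_x,ρ_y) and, for all i, τ_i ≤ δ_x/(2R_K r_y + 2L_x(ŷ)r_max)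 and σ_{i+1} ≤ δ_y/(L_y(x̂)r_y + R_K(r_max+δ_x)). -/
/-!
All quantities required to be small scale linearly with the bound `t` on `r_max`. With
`c = sqrt (ν (1 - δ) δ / (μ - δ))`, take `r_y = (c + 1) t` and `δ_x = A t`, where `A` is chosen so
that the bound on `τ₀` holds; then let `δ_y` be the value that makes the bound on `σ` an equality.
The radii of both balls are at most a constant multiple of `t`, hence fit into any prescribed
neighbourhood of the critical point once `t` is small. The summand `t` in `r_y` keeps `r_y`
positive, so the denominator of the bound on `τ` is nonzero even when the initial iterate is the
critical point itself.
-/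

open scoped RealInnerProductSpace Topology

/-- The scalar core: every radius `r > 0` leaves room for the locality parameters, for all
`R = r_max` below some threshold `t`. -/
lemma exists_threshold_locality_params {r c L M K T σ : ℝ} (hr : 0 < r) (hc : 0 ≤ c)
    (hL : 0 ≤ L) (hM : 0 ≤ M) (hK : 0 < K) (hT : 0 < T) (hσ : 0 < σ) :
    ∃ t > (0 : ℝ), ∀ R : ℝ, 0 ≤ R → R ≤ t →
      ∃ δx δy ry : ℝ, 0 < δx ∧ 0 < δy ∧ R * c ≤ ry ∧ R + δx ≤ r ∧ ry + δy ≤ r ∧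
        T ≤ δx / (2 * K * ry + 2 * L * R) ∧ σ ≤ δy / (M * ry + K * (R + δx)) := by
  obtain ⟨A, hA⟩ : ∃ A, A = T * (2 * K * (c + 1) + 2 * L) := ⟨_, rfl⟩
  have hA0 : 0 < A := by rw [hA]; positivity
  obtain ⟨B, hB⟩ : ∃ B, B = (c + 1) + σ * (M * (c + 1) + K * (1 + A)) := ⟨_, rfl⟩
  have hB0 : 0 < B := by rw [hB]; positivity
  obtain ⟨t, ht⟩ : ∃ t, t = r / (1 + A + B) := ⟨_, rfl⟩
  have ht0 : 0 < t := by rw [ht]; positivity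
  have htr : t * (1 + A + B) = r := by rw [ht]; field_simp
  refine ⟨t, ht0, fun R hR hRt => ?_⟩
  have hden : 0 < M * ((c + 1) * t) + K * (R + A * t) := by positivity
  refine ⟨A * t, σ * (M * ((c + 1) * t) + K * (R + A * t)), (c + 1) * t, by positivity,
    by positivity, ?_, ?_, ?_, ?_, ?_⟩
  · nlinarith [mul_le_mul_of_nonneg_right hRt hc]
  · nlinarith [mul_pos ht0 hB0]
  · calc (c + 1) * t + σ * (M * ((c + 1) * t) + K * (R + A * t))
        ≤ (c + 1) * t + σ * (M * ((c + 1) * t) + K * (t + A * t)) := by gcongr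
      _ = t * B := by rw [hB]; ring
      _ ≤ r := by nlinarith [mul_pos ht0 hA0]
  · rw [le_div_iff₀ (by positivity)]
    calc T * (2 * K * ((c + 1) * t) + 2 * L * R)
        ≤ T * (2 * K * ((c + 1) * t) + 2 * L * t) := by gcongr
      _ = A * t := by rw [hA]; ring
  · rw [le_div_iff₀ hden]

/-- **Proposition 6.6: Assumption 5.2 holds for initializations close to the solution.**
Under the assumptions of Theorem 6.1, 6.3 or 6.4 (fixed parameters `0 < δ ≤ μ < 1`, step
lengths `τ_i ≤ τ_0` and `σ_i ≡ σ > 0`, relaxation parameters `ω_i` with `ω_0 > 0`, constants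
`L_x(ŷ), L_y(x̂), R_K` from Assumption 3.2, and `ρ_x, ρ_y > 0` for the neighborhood
`U(ρ_x,ρ_y) = (B(x̂,ρ_x) ∩ X_G) × (B(ŷ,ρ_y) ∩ Y_{F*})`), there exists `ε > 0` such that
whenever the initial iterate `u⁰ = (x⁰,y⁰)` satisfies
`r_max := sqrt(2δ⁻¹(‖x⁰−x̂‖² + ν⁻¹‖y⁰−ŷ‖²)) ≤ ε` with `ν := σ₁ω₀/τ₀`, Assumption 5.2
holds: there exist `δ_x, δ_y > 0` and `r_y ≥ r_max·sqrt(ν(1−δ)δ/(μ−δ))` such that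
`B(x̂, r_max+δ_x) × B(ŷ, r_y+δ_y) ⊆ U(ρ_x,ρ_y)` and for all `i` the step bounds (5.7)
hold. -/
theorem assumption52_near_initialization
    {X Y : Type*} [NormedAddCommGroup X] [InnerProductSpace ℝ X] [CompleteSpace X]
    [NormedAddCommGroup Y] [InnerProductSpace ℝ Y] [CompleteSpace Y]
    (xhat : X) (yhat : Y)
    (XG : Set X) (YF : Set Y) (hXG : XG ∈ 𝓝 xhat) (hYF : YF ∈ 𝓝 yhat)
    (ρx ρy : ℝ) (hρx : 0 < ρx) (hρy : 0 < ρy)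
    (Lxhat Lyhat R_K : ℝ) (hLx : 0 ≤ Lxhat) (hLy : 0 ≤ Lyhat) (hRK : 0 < R_K)
    (δ μ : ℝ) (hδ : 0 < δ) (hδμ : δ ≤ μ) (hμ : μ < 1)
    (τ : ℕ → ℝ) (σ ω₀ : ℝ)
    (hτpos : ∀ i, 0 < τ i) (hτ0 : ∀ i, τ i ≤ τ 0)
    (hσpos : 0 < σ) (hω₀ : 0 < ω₀) :
    ∃ ε > (0 : ℝ), ∀ x0 : X, ∀ y0 : Y,
      Real.sqrt (2 / δ * (‖x0 - xhat‖ ^ 2 + (σ * ω₀ / τ 0)⁻¹ * ‖y0 - yhat‖ ^ 2)) ≤ ε →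
      ∃ δx δy ry : ℝ, 0 < δx ∧ 0 < δy ∧
        ry ≥ Real.sqrt (2 / δ * (‖x0 - xhat‖ ^ 2 + (σ * ω₀ / τ 0)⁻¹ * ‖y0 - yhat‖ ^ 2)) *
          Real.sqrt ((σ * ω₀ / τ 0) * (1 - δ) * δ / (μ - δ)) ∧
        Metric.closedBall xhat
            (Real.sqrt (2 / δ * (‖x0 - xhat‖ ^ 2 + (σ * ω₀ / τ 0)⁻¹ * ‖y0 - yhat‖ ^ 2))
              + δx) ×ˢ
          Metric.closedBall yhat (ry + δy) ⊆
          (Metric.closedBall xhat ρx ∩ XG) ×ˢ (Metric.closedBall yhat ρy ∩ YF) ∧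
        ∀ i : ℕ,
          τ i ≤ δx / (2 * R_K * ry + 2 * Lxhat *
            Real.sqrt (2 / δ * (‖x0 - xhat‖ ^ 2 + (σ * ω₀ / τ 0)⁻¹ * ‖y0 - yhat‖ ^ 2))) ∧
          σ ≤ δy / (Lyhat * ry + R_K *
            (Real.sqrt (2 / δ * (‖x0 - xhat‖ ^ 2 + (σ * ω₀ / τ 0)⁻¹ * ‖y0 - yhat‖ ^ 2))
              + δx)) := by
  obtain ⟨rx, hrx, hballx⟩ := Metric.nhds_basis_closedBall.mem_iff.1
    (Filter.inter_mem (Metric.closedBall_mem_nhds xhat hρx) hXG)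
  obtain ⟨ry', hry', hbally⟩ := Metric.nhds_basis_closedBall.mem_iff.1
    (Filter.inter_mem (Metric.closedBall_mem_nhds yhat hρy) hYF)
  obtain ⟨t, ht, H⟩ := exists_threshold_locality_params (lt_min hrx hry')
    (Real.sqrt_nonneg ((σ * ω₀ / τ 0) * (1 - δ) * δ / (μ - δ))) hLx hLy hRK (hτpos 0) hσpos
  refine ⟨t, ht, fun x0 y0 h0 => ?_⟩
  obtain ⟨δx, δy, ry, hδx, hδy, hry, hx, hy, hτ, hσ⟩ := H _ (Real.sqrt_nonneg _) h0
  exact ⟨δx, δy, ry, hδx, hδy, hry,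
    Set.prod_mono
      ((Metric.closedBall_subset_closedBall (hx.trans (min_le_left _ _))).trans hballx)
      ((Metric.closedBall_subset_closedBall (hy.trans (min_le_right _ _))).trans hbally),
    fun i => ⟨(hτ0 i).trans hτ, hσ⟩⟩
end

section
/- Let ρ(t) := 2t − t² and γ > 0. Then for every t ∈ ℝ, sup_{s ∈ ℝ} ( ρ(st) − (γ/2)s² ) = 2t²/(2t² + γ), and this supremum is attained. -/
/-- **Huber-regularized ℓ⁰ function (Section 2.2).**
Let `ρ(t) = 2t − t²` and `γ > 0`.  Then for every `t ∈ ℝ`,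
`sup_{s ∈ ℝ} (ρ(st) − (γ/2) s²) = 2t²/(2t² + γ)`, and the supremum is attained;
i.e. `2t²/(2t²+γ)` is the greatest element of the set of values `ρ(st) − (γ/2)s²`. -/
theorem huber_l0_sup (γ : ℝ) (hγ : 0 < γ) (t : ℝ) :
    IsGreatest {v : ℝ | ∃ s : ℝ, v = (2 * (s * t) - (s * t) ^ 2) - γ / 2 * s ^ 2}
      (2 * t ^ 2 / (2 * t ^ 2 + γ)) := by
  have hD : 0 < 2 * t ^ 2 + γ := by positivity
  constructor
  · -- The maximizer is the critical point of the concave quadratic in `s`.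
    refine ⟨2 * t / (2 * t ^ 2 + γ), ?_⟩
    field_simp
    ring
  · rintro v ⟨s, rfl⟩
    rw [le_div_iff₀ hD]
    -- With `D = 2t² + γ`, completing the square gives `2t² - v D = (s D - 2t)² / 2`.
    linarith [sq_nonneg (s * (2 * t ^ 2 + γ) - 2 * t)]
end
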